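/- arXiv:2510.02113 — 2 statements merged into one kernel-verified Lean document; each statement's English description precedes it below -/
import Mathlib

section
/- Let G be a DAG containing no active cycle, let X, Y, Z ⊆ V be disjoint with TRAILS(X,Y,Z) ≠ ∅, and let T be a minimal element of TRAILS(X,Y,Z) with respect to <_TRAIL, with converging nodes c_1, …, c_C. If for some i the arc c_i → c_{i+1} belongs to E and c_{i+1} ∈ Z, then c_i ∈ Z. -/
/-!
Suppose `cᵢ ∉ Z`, and replace the part of `T` between `cᵢ` and `cᵢ₊₁` by the arc `cᵢ → cᵢ₊₁`.
This arc leaves `cᵢ`, so `cᵢ` stops converging and, not being in `Z`, does not block the new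
trail; it enters `cᵢ₊₁`, which therefore still converges. All other remaining nodes keep their
neighbours. Hence the new trail is activated and has fewer converging nodes outside `Z` than
`T`, against the minimality of `T` in the first component of the order.
-/

open scoped Classical

/-- `E` is the arc relation of a (finite) directed acyclic graph: there are no
directed cycles (hence also no loops and no pairs of opposite arcs). -/
def IsDAG {V : Type*} (E : V → V → Prop) : Prop :=
  ∀ v : V, ¬ Relation.TransGen E v v

/-- `d` is a descendant of `v`: there is a (nonempty) directed path from `v` to `d`. -/
def Desc {V : Type*} (E : V → V → Prop) (v d : V) : Prop :=
  Relation.TransGen E v d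

/-- A trail: a sequence of `len + 1` pairwise distinct nodes
`f 0, f 1, …, f len`, consecutive ones joined by an arc of `E`
in one of the two possible directions.  Its length is `len`. -/
structure Trail (V : Type*) (E : V → V → Prop) where
  len : ℕ
  f : ℕ → V
  arcs : ∀ i, i < len → E (f i) (f (i + 1)) ∨ E (f (i + 1)) (f i)
  inj : ∀ i, i ≤ len → ∀ j, j ≤ len → f i = f j → i = j

namespace Trail

variable {V : Type*} {E : V → V → Prop}

/-- The trail has a converging connection at the interior index `i`:
`f (i-1) → f i ← f (i+1)`. -/
def ConvAt (T : Trail V E) (i : ℕ) : Prop :=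
  0 < i ∧ i < T.len ∧ E (T.f (i - 1)) (T.f i) ∧ E (T.f (i + 1)) (T.f i)

/-- The trail is activated by `Z`: every interior converging node is in `Z` or has a
descendant in `Z`, and every interior non-converging node is not in `Z`. -/
def ActivatedBy (T : Trail V E) (Z : Set V) : Prop :=
  ∀ i, 0 < i → i < T.len →
    (T.ConvAt i → (T.f i ∈ Z ∨ ∃ d ∈ Z, Desc E (T.f i) d)) ∧
    (¬ T.ConvAt i → T.f i ∉ Z)

/-- The trail has a chord: an arc of `E` between two non-consecutive nodes. -/
def HasChord (T : Trail V E) : Prop :=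
  ∃ i j, i + 1 < j ∧ j ≤ T.len ∧ (E (T.f i) (T.f j) ∨ E (T.f j) (T.f i))

end Trail

/-- `E` contains an active cycle: a closed trail
`v ← x 0 ⇄ x 1 ⇄ ⋯ ⇄ x n ⇄ x (n+1) → v` (so `w = x 0` and `z = x (n+1)` are
distinct parents of `v`), with `n ≥ 1`, such that the trail
`x 0 ⇄ ⋯ ⇄ x (n+1)` has no converging connection and the closed trail has no chords. -/
def HasActiveCycle {V : Type*} (E : V → V → Prop) : Prop :=
  ∃ (v : V) (n : ℕ) (x : ℕ → V),
    1 ≤ n ∧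
    E (x 0) v ∧ E (x (n + 1)) v ∧
    (∀ i, i ≤ n + 1 → x i ≠ v) ∧
    (∀ i, i ≤ n + 1 → ∀ j, j ≤ n + 1 → x i = x j → i = j) ∧
    (∀ i, i < n + 1 → E (x i) (x (i + 1)) ∨ E (x (i + 1)) (x i)) ∧
    (∀ i, 0 < i → i < n + 1 → ¬ (E (x (i - 1)) (x i) ∧ E (x (i + 1)) (x i))) ∧
    (∀ i j, i + 1 < j → j ≤ n + 1 → ¬ (i = 0 ∧ j = n + 1) →
      ¬ E (x i) (x j) ∧ ¬ E (x j) (x i)) ∧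
    (∀ i, 1 ≤ i → i ≤ n → ¬ E v (x i) ∧ ¬ E (x i) v)

/-- A descendant path from `c` to `Z` with `n` intermediate nodes:
`c = d 0 → d 1 → ⋯ → d n → d (n+1) ∈ Z`, with `d j ∉ Z` for all `j ≤ n`. -/
def IsDescPath {V : Type*} (E : V → V → Prop) (Z : Set V) (c : V) (d : ℕ → V) (n : ℕ) :
    Prop :=
  d 0 = c ∧ d (n + 1) ∈ Z ∧ (∀ j, j ≤ n → d j ∉ Z) ∧ (∀ j, j ≤ n → E (d j) (d (j + 1)))

/-- `n_Z(c)`: the least number of intermediate nodes of a descendant path from `c` to `Z`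
(this is `0` when `c ∈ Z`, since then no descendant path exists and `sInf ∅ = 0`). -/
noncomputable def nZ {V : Type*} (E : V → V → Prop) (Z : Set V) (c : V) : ℕ :=
  sInf {n | ∃ d : ℕ → V, IsDescPath E Z c d n}

namespace Trail

variable {V : Type*} {E : V → V → Prop}

/-- The set of (interior) indices of `T` carrying a converging connection. -/
noncomputable def convIdx (T : Trail V E) : Finset ℕ :=
  (Finset.Ioo 0 T.len).filter fun i => T.ConvAt i

/-- The weight vector `(|{c₁,…,c_C} \ Z|, C, Σᵢ n_Z(i), Σᵢ n_t(i))` of a trail,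
whose lexicographic comparison induces the order `<_TRAIL`.  (The total length
of the subtrails, `Σᵢ n_t(i)`, equals `len - 1 - C`.) -/
noncomputable def weight (T : Trail V E) (Z : Set V) : ℕ × ℕ × ℕ × ℕ :=
  ((T.convIdx.filter fun i => T.f i ∉ Z).card,
   T.convIdx.card,
   ∑ i ∈ T.convIdx, nZ E Z (T.f i),
   T.len - 1 - T.convIdx.card)

end Trail

/-- Strict lexicographic order on `ℕ × ℕ × ℕ × ℕ`. -/
def LexLt4 (a b : ℕ × ℕ × ℕ × ℕ) : Prop :=
  a.1 < b.1 ∨ (a.1 = b.1 ∧ (a.2.1 < b.2.1 ∨ (a.2.1 = b.2.1 ∧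
    (a.2.2.1 < b.2.2.1 ∨ (a.2.2.1 = b.2.2.1 ∧ a.2.2.2 < b.2.2.2)))))

/-- `T ∈ TRAILS(X, Y, Z)`: `T` is a trail from a node of `X` to a node of `Y`
activated by `Z`. -/
def InTRAILS {V : Type*} {E : V → V → Prop} (T : Trail V E) (X Y Z : Set V) : Prop :=
  T.f 0 ∈ X ∧ T.f T.len ∈ Y ∧ T.ActivatedBy Z

/-- `T` is a minimal element of `TRAILS(X, Y, Z)` with respect to `<_TRAIL`. -/
def MinimalTrail {V : Type*} {E : V → V → Prop} (T : Trail V E) (X Y Z : Set V) : Prop :=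
  InTRAILS T X Y Z ∧
    ∀ T' : Trail V E, InTRAILS T' X Y Z → ¬ LexLt4 (T'.weight Z) (T.weight Z)

namespace Trail

/-- The increasing enumeration of `ℕ` with the indices strictly between `a` and `b` left out
(for `a < b`). It sends an index of the trail shortened by an arc between the nodes `a` and `b`
to the index of the same node on the original trail. -/
def skipIdx (a b i : ℕ) : ℕ :=
  if i ≤ a then i else i + (b - a - 1)

section SkipIdx

variable {a b i n : ℕ}

theorem skipIdx_of_le (h : i ≤ a) : skipIdx a b i = i :=
  if_pos h

theorem skipIdx_of_lt (h : a < i) : skipIdx a b i = i + (b - a - 1) :=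
  if_neg h.not_ge

theorem skipIdx_succ_self (hab : a < b) : skipIdx a b (a + 1) = b := by
  rw [skipIdx_of_lt a.lt_succ_self]
  omega

theorem skipIdx_succ_of_ne (h : i ≠ a) : skipIdx a b (i + 1) = skipIdx a b i + 1 := by
  unfold skipIdx
  split_ifs <;> omega

theorem skipIdx_pred_of_ne (h : i ≠ a + 1) : skipIdx a b (i - 1) = skipIdx a b i - 1 := by
  unfold skipIdx
  split_ifs <;> omega

theorem strictMono_skipIdx (a b : ℕ) : StrictMono (skipIdx a b) := by
  intro i j hij
  unfold skipIdx
  split_ifs <;> omega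

theorem skipIdx_sub (hab : a < b) (hb : b ≤ n) : skipIdx a b (n - (b - a - 1)) = n := by
  rw [skipIdx_of_lt (by omega)]
  omega

theorem skipIdx_pos_iff : 0 < skipIdx a b i ↔ 0 < i := by
  simpa only [skipIdx_of_le a.zero_le] using (strictMono_skipIdx a b).lt_iff_lt (a := 0) (b := i)

theorem skipIdx_lt_iff (hab : a < b) (hb : b ≤ n) :
    skipIdx a b i < n ↔ i < n - (b - a - 1) := by
  simpa only [skipIdx_sub hab hb] using
    (strictMono_skipIdx a b).lt_iff_lt (a := i) (b := n - (b - a - 1))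

theorem skipIdx_le_iff (hab : a < b) (hb : b ≤ n) :
    skipIdx a b i ≤ n ↔ i ≤ n - (b - a - 1) := by
  simpa only [skipIdx_sub hab hb] using
    (strictMono_skipIdx a b).le_iff_le (a := i) (b := n - (b - a - 1))

end SkipIdx

variable {V : Type*} {E : V → V → Prop}

/-- The trail obtained from `T` by replacing the part between the indices `a < b` by a single
arc, of either direction, joining `T.f a` and `T.f b`. -/
@[simps]
def shortcut (T : Trail V E) (a b : ℕ) (hab : a < b) (hb : b ≤ T.len)
    (hE : E (T.f a) (T.f b) ∨ E (T.f b) (T.f a)) : Trail V E where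
  len := T.len - (b - a - 1)
  f i := T.f (skipIdx a b i)
  arcs i hi := by
    obtain rfl | hia := eq_or_ne i a
    · rwa [skipIdx_of_le le_rfl, skipIdx_succ_self hab]
    · rw [skipIdx_succ_of_ne hia]
      exact T.arcs _ ((skipIdx_lt_iff hab hb).2 hi)
  inj i hi j hj h :=
    (strictMono_skipIdx a b).injective <|
      T.inj _ ((skipIdx_le_iff hab hb).2 hi) _ ((skipIdx_le_iff hab hb).2 hj) h

theorem mem_convIdx {T : Trail V E} {i : ℕ} : i ∈ T.convIdx ↔ T.ConvAt i := by
  simp only [convIdx, Finset.mem_filter, Finset.mem_Ioo, and_iff_right_iff_imp]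
  exact fun h => ⟨h.1, h.2.1⟩

section Shortcut

variable {T : Trail V E} {a b : ℕ} {hab : a < b} {hb : b ≤ T.len}

theorem convAt_shortcut_iff_of_ne {hE : E (T.f a) (T.f b) ∨ E (T.f b) (T.f a)} {i : ℕ}
    (hia : i ≠ a) (hia' : i ≠ a + 1) :
    (T.shortcut a b hab hb hE).ConvAt i ↔ T.ConvAt (skipIdx a b i) := by
  simp only [ConvAt, shortcut_len, shortcut_f, skipIdx_pos_iff, skipIdx_lt_iff hab hb,
    skipIdx_succ_of_ne hia, skipIdx_pred_of_ne hia']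

theorem not_convAt_shortcut_self {hE : E (T.f a) (T.f b) ∨ E (T.f b) (T.f a)}
    (hba : ¬ E (T.f b) (T.f a)) : ¬ (T.shortcut a b hab hb hE).ConvAt a := by
  rintro ⟨-, -, -, h⟩
  rw [shortcut_f, shortcut_f, skipIdx_succ_self hab, skipIdx_of_le le_rfl] at h
  exact hba h

theorem convAt_shortcut_succ (hE : E (T.f a) (T.f b)) (hconv : T.ConvAt b) :
    (T.shortcut a b hab hb (.inl hE)).ConvAt (a + 1) := by
  refine ⟨a.succ_pos, ?_, ?_, ?_⟩
  · rw [shortcut_len, ← skipIdx_lt_iff hab hb, skipIdx_succ_self hab]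
    exact hconv.2.1
  · rwa [Nat.add_sub_cancel, shortcut_f, shortcut_f, skipIdx_of_le le_rfl, skipIdx_succ_self hab]
  · rw [shortcut_f, shortcut_f, skipIdx_succ_of_ne a.succ_ne_self, skipIdx_succ_self hab]
    exact hconv.2.2.2

theorem convAt_shortcut_iff (hE : E (T.f a) (T.f b)) (hconv : T.ConvAt b) {i : ℕ} (hia : i ≠ a) :
    (T.shortcut a b hab hb (.inl hE)).ConvAt i ↔ T.ConvAt (skipIdx a b i) := by
  obtain rfl | hia' := eq_or_ne i (a + 1)
  · rw [skipIdx_succ_self hab]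
    exact iff_of_true (convAt_shortcut_succ hE hconv) hconv
  · exact convAt_shortcut_iff_of_ne hia hia'

variable {Z : Set V}

theorem ActivatedBy.shortcut (hact : T.ActivatedBy Z) (hE : E (T.f a) (T.f b))
    (hba : ¬ E (T.f b) (T.f a)) (hconv : T.ConvAt b) (ha : T.f a ∉ Z) :
    (T.shortcut a b hab hb (.inl hE)).ActivatedBy Z := by
  intro i hi hlen
  obtain rfl | hia := eq_or_ne i a
  · refine ⟨fun h => absurd h (not_convAt_shortcut_self hba), fun _ => ?_⟩
    rwa [shortcut_f, skipIdx_of_le le_rfl]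
  · rw [convAt_shortcut_iff hE hconv hia]
    exact hact _ (skipIdx_pos_iff.2 hi) ((skipIdx_lt_iff hab hb).2 hlen)

theorem weight_shortcut_fst_lt (hE : E (T.f a) (T.f b)) (hba : ¬ E (T.f b) (T.f a))
    (hconva : T.ConvAt a) (hconvb : T.ConvAt b) (ha : T.f a ∉ Z) :
    ((T.shortcut a b hab hb (.inl hE)).weight Z).1 < (T.weight Z).1 := by
  have ha_mem : a ∈ T.convIdx.filter fun i => T.f i ∉ Z :=
    Finset.mem_filter.2 ⟨mem_convIdx.2 hconva, ha⟩
  dsimp only [weight]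
  refine lt_of_le_of_lt ?_ (Finset.card_erase_lt_of_mem ha_mem)
  refine Finset.card_le_card_of_injOn (skipIdx a b) (fun i hi => ?_)
    (strictMono_skipIdx a b).injective.injOn
  obtain ⟨hconvi, hiZ⟩ := Finset.mem_filter.1 hi
  rw [mem_convIdx] at hconvi
  have hia : i ≠ a := by
    rintro rfl
    exact not_convAt_shortcut_self hba hconvi
  have skip_ne : skipIdx a b i ≠ a := fun h =>
    hia ((strictMono_skipIdx a b).injective (h.trans (skipIdx_of_le le_rfl).symm))
  exact Finset.mem_erase.2 ⟨skip_ne, Finset.mem_filter.2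
    ⟨mem_convIdx.2 ((convAt_shortcut_iff hE hconvb hia).1 hconvi), hiZ⟩⟩

end Shortcut

end Trail

theorem InTRAILS.shortcut {V : Type*} {E : V → V → Prop} {T : Trail V E} {X Y Z : Set V}
    {a b : ℕ} {hab : a < b} {hb : b ≤ T.len} (hT : InTRAILS T X Y Z) (hE : E (T.f a) (T.f b))
    (hba : ¬ E (T.f b) (T.f a)) (hconv : T.ConvAt b) (ha : T.f a ∉ Z) :
    InTRAILS (T.shortcut a b hab hb (.inl hE)) X Y Z := by
  obtain ⟨hX, hY, hact⟩ := hT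
  refine ⟨?_, ?_, hact.shortcut hE hba hconv ha⟩
  · rwa [Trail.shortcut_f, Trail.skipIdx_of_le a.zero_le]
  · rwa [Trail.shortcut_f, Trail.shortcut_len, Trail.skipIdx_sub hab hb]

theorem MinimalTrail.weight_fst_le {V : Type*} {E : V → V → Prop} {T T' : Trail V E}
    {X Y Z : Set V} (hT : MinimalTrail T X Y Z) (hT' : InTRAILS T' X Y Z) :
    (T.weight Z).1 ≤ (T'.weight Z).1 :=
  not_lt.1 fun h => hT.2 T' hT' (.inl h)

theorem IsDAG.asymm {V : Type*} {E : V → V → Prop} (hdag : IsDAG E) {u v : V} (huv : E u v) :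
    ¬ E v u :=
  fun hvu => hdag u (.head huv (.single hvu))

theorem minimal_trail_arc_forward_in_Z_general {V : Type*} {E : V → V → Prop} {X Y Z : Set V}
    {T : Trail V E} (hT : MinimalTrail T X Y Z) {a b : ℕ} (hconva : T.ConvAt a)
    (hconvb : T.ConvAt b) (hab : a < b) (hE : E (T.f a) (T.f b)) (hba : ¬ E (T.f b) (T.f a)) :
    T.f a ∈ Z := by
  by_contra ha
  have hmem : InTRAILS (T.shortcut a b hab hconvb.2.1.le (.inl hE)) X Y Z :=
    hT.1.shortcut hE hba hconvb ha
  exact (hT.weight_fst_le hmem).not_gt (Trail.weight_shortcut_fst_lt hE hba hconva hconvb ha)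

/-- For a minimal trail `T` of `TRAILS(X,Y,Z)`: if `cᵢ → cᵢ₊₁ ∈ E`
for consecutive converging nodes and `cᵢ₊₁ ∈ Z`, then `cᵢ ∈ Z`. -/
theorem minimal_trail_arc_forward_in_Z
    {V : Type*} [Fintype V] (E : V → V → Prop) (hdag : IsDAG E)
    (hnac : ¬ HasActiveCycle E) (X Y Z : Set V)
    (hXY : Disjoint X Y) (hXZ : Disjoint X Z) (hYZ : Disjoint Y Z)
    (hne : ∃ T₀ : Trail V E, InTRAILS T₀ X Y Z)
    (T : Trail V E) (hT : MinimalTrail T X Y Z) :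
    ∀ a b, T.ConvAt a → T.ConvAt b → a < b →
      (∀ i, a < i → i < b → ¬ T.ConvAt i) →
      E (T.f a) (T.f b) → T.f b ∈ Z → T.f a ∈ Z := by
  intro a b ha hb hab _ hE _
  exact minimal_trail_arc_forward_in_Z_general hT ha hb hab hE (hdag.asymm hE)
end

section
/- Let G be a DAG and let K ⊆ V be a set with local relationships. Then for every pair of distinct nodes v_1, v_2 ∈ K, either v_1 and v_2 are connected in K (joined by a trail all of whose nodes lie in K) or {v_1} and {v_2} are d-separated by the empty set. -/
open scoped Classical

/-- `K` has local relationships: whenever two nodes of `K` are joined by a trail with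
no converging connection all of whose interior nodes avoid `K`, they are adjacent. -/
def LocalRel {V : Type*} (E : V → V → Prop) (K : Set V) : Prop :=
  ∀ T : Trail V E, 1 ≤ T.len → T.f 0 ∈ K → T.f T.len ∈ K →
    (∀ i, 0 < i → i < T.len → T.f i ∉ K) →
    (∀ i, 0 < i → i < T.len → ¬ T.ConvAt i) →
    E (T.f 0) (T.f T.len) ∨ E (T.f T.len) (T.f 0)

/-- `S` d-separates `A` and `B`: every trail from a node of `A` to a node of `B`
is blocked by (i.e. not activated by) `S`. -/
def DSep {V : Type*} (E : V → V → Prop) (A B S : Set V) : Prop :=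
  ∀ T : Trail V E, T.f 0 ∈ A → T.f T.len ∈ B → ¬ T.ActivatedBy S

/-- `S` is connected: any two distinct nodes of `S` are joined by a trail all of
whose nodes lie in `S`. -/
def ConnectedIn {V : Type*} (E : V → V → Prop) (S : Set V) : Prop :=
  ∀ v1 ∈ S, ∀ v2 ∈ S, v1 ≠ v2 → ∃ T : Trail V E,
    T.f 0 = v1 ∧ T.f T.len = v2 ∧ ∀ i, i ≤ T.len → T.f i ∈ S

/-!
A trail activated by `∅` has no converging connection. Cut it at all its nodes lying in `K`: each
piece has its ends in `K` and its interior outside `K`, so local relationships make the ends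
adjacent. The resulting arcs form a walk inside `K`, which contains a path with the same ends.
-/

namespace Trail

variable {V : Type*} {E : V → V → Prop}

/-- The initial part of a trail, up to index `k`. -/
def take (T : Trail V E) (k : ℕ) (hk : k ≤ T.len) : Trail V E where
  len := k
  f := T.f
  arcs i hi := T.arcs i (hi.trans_le hk)
  inj i hi j hj := T.inj i (hi.trans hk) j (hj.trans hk)

/-- The final part of a trail, from index `k` on. -/
def drop (T : Trail V E) (k : ℕ) (hk : k ≤ T.len) : Trail V E where
  len := T.len - k
  f i := T.f (k + i)
  arcs i hi := T.arcs (k + i) (by lia)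
  inj i hi j hj h := Nat.add_left_cancel (T.inj (k + i) (by lia) (k + j) (by lia) h)

lemma drop_f_len (T : Trail V E) (k : ℕ) (hk : k ≤ T.len) :
    (T.drop k hk).f (T.drop k hk).len = T.f T.len :=
  congrArg T.f (Nat.add_sub_cancel' hk)

lemma ConvAt.of_take {T : Trail V E} {k : ℕ} {hk : k ≤ T.len} {i : ℕ}
    (h : (T.take k hk).ConvAt i) : T.ConvAt i :=
  ⟨h.1, h.2.1.trans_le hk, h.2.2⟩

lemma ConvAt.of_drop {T : Trail V E} {k : ℕ} {hk : k ≤ T.len} {i : ℕ}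
    (h : (T.drop k hk).ConvAt i) : T.ConvAt (k + i) := by
  obtain ⟨hpos, hlt, hprev, hnext⟩ := h
  refine ⟨Nat.add_pos_right k hpos, Nat.add_lt_of_lt_sub' hlt, ?_, hnext⟩
  rwa [Nat.add_sub_assoc hpos]

lemma activatedBy_empty_iff {T : Trail V E} : T.ActivatedBy ∅ ↔ ∀ i, ¬ T.ConvAt i := by
  refine ⟨fun h i hi => ?_, fun h i _ _ => ⟨fun hi => (h i hi).elim, fun _ => Set.notMem_empty _⟩⟩
  simpa using (h i hi.1 hi.2.1).1 hi

end Trail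

section LocalRelationships

variable {V : Type*} {E : V → V → Prop} {K : Set V}

lemma not_dSep_singleton_empty_iff {v w : V} :
    ¬ DSep E {v} {w} ∅ ↔
      ∃ T : Trail V E, T.f 0 = v ∧ T.f T.len = w ∧ ∀ i, ¬ T.ConvAt i := by
  simp only [DSep, Set.mem_singleton_iff, Trail.activatedBy_empty_iff, not_forall, not_not,
    not_exists, exists_prop]

lemma exists_trail_of_reachable_induce_fromRel {v w : K}
    (h : ((SimpleGraph.fromRel E).induce K).Reachable v w) :
    ∃ T : Trail V E, T.f 0 = v ∧ T.f T.len = w ∧ ∀ i, i ≤ T.len → T.f i ∈ K := by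
  obtain ⟨p, hp⟩ := h.exists_isPath
  exact ⟨{ len := p.length
           f := fun i => p.getVert i
           arcs := fun _ hi => (p.adj_getVert_succ hi).2
           inj := fun _ hi _ hj hij => hp.getVert_injOn hi hj (Subtype.ext hij) },
    congrArg Subtype.val p.getVert_zero, congrArg Subtype.val p.getVert_length,
    fun i _ => (p.getVert i).2⟩

lemma LocalRel.reachable_of_forall_not_convAt (hK : LocalRel E K) (T : Trail V E)
    (hstart : T.f 0 ∈ K) (hend : T.f T.len ∈ K) (hT : ∀ i, ¬ T.ConvAt i) :
    ((SimpleGraph.fromRel E).induce K).Reachable ⟨T.f 0, hstart⟩ ⟨T.f T.len, hend⟩ := by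
  by_cases hcut : ∃ k, 0 < k ∧ k < T.len ∧ T.f k ∈ K
  · obtain ⟨k, _, hlt, hkK⟩ := hcut
    have hinit := hK.reachable_of_forall_not_convAt (T.take k hlt.le) hstart hkK
      fun i hi => hT i hi.of_take
    have hfinal := hK.reachable_of_forall_not_convAt (T.drop k hlt.le) hkK
      (by rwa [T.drop_f_len]) fun i hi => hT (k + i) hi.of_drop
    simp only [T.drop_f_len] at hfinal
    exact hinit.trans hfinal
  · obtain hlen | hlen := Nat.eq_zero_or_pos T.len
    · simp only [hlen, SimpleGraph.Reachable.refl]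
    · have hinterior : ∀ i, 0 < i → i < T.len → T.f i ∉ K := fun i hpos hlt hi =>
        hcut ⟨i, hpos, hlt, hi⟩
      have hadj := hK T hlen hstart hend hinterior fun i _ _ => hT i
      have hne : T.f 0 ≠ T.f T.len := fun h =>
        hlen.ne (T.inj 0 (Nat.zero_le _) T.len le_rfl h)
      exact SimpleGraph.Adj.reachable ⟨hne, hadj⟩
termination_by T.len
decreasing_by
  · exact hlt
  · exact Nat.sub_lt (Nat.zero_lt_of_lt hlt) ‹0 < k›

theorem localRel_connected_or_dsep_general (hK : LocalRel E K) {v w : V} (hv : v ∈ K)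
    (hw : w ∈ K) :
    (∃ T : Trail V E, T.f 0 = v ∧ T.f T.len = w ∧ ∀ i, i ≤ T.len → T.f i ∈ K) ∨
      DSep E {v} {w} ∅ := by
  refine or_iff_not_imp_right.mpr fun hsep => ?_
  obtain ⟨T, rfl, rfl, hT⟩ := not_dSep_singleton_empty_iff.mp hsep
  exact exists_trail_of_reachable_induce_fromRel (hK.reachable_of_forall_not_convAt T hv hw hT)

end LocalRelationships

/-- If `K` has local relationships, then any two distinct nodes of `K`
are either connected within `K` or d-separated by the empty set. -/
theorem localRel_connected_or_dsep
    {V : Type*} [Fintype V] (E : V → V → Prop) (hdag : IsDAG E) (K : Set V)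
    (hK : LocalRel E K) :
    ∀ v1 ∈ K, ∀ v2 ∈ K, v1 ≠ v2 →
      (∃ T : Trail V E, T.f 0 = v1 ∧ T.f T.len = v2 ∧ ∀ i, i ≤ T.len → T.f i ∈ K) ∨
      DSep E {v1} {v2} ∅ :=
  fun _ hv₁ _ hv₂ _ => localRel_connected_or_dsep_general hK hv₁ hv₂
end
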